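/- Let r_0, r_1, …, r_k be rows (in that order) with supp(r_i) ⊆ supp(r_0) for all 1 ≤ i ≤ k, such that every consecutive pair (r_0, r_1), (r_1, r_2), …, (r_{k−1}, r_k) satisfies the alternating sign condition. Perform k successive Case 1 row exchanges moving r_0 down past r_1, then r_2, …, then r_k; denote the final image of r_0 by r_0^{(k)} and the images of r_i (i ≥ 1) by r'_i. Then l(r_0^{(k)}) = l(r_0) − Σ_{i=1}^k C(r_i) and η(r_0^{(k)}) = (−1)^{Σ_{i=1}^k C(r_i)} η(r_0); for each 1 ≤ i ≤ k, l(r'_i) = l(r_i) and η(r'_i) = (−1)^{C(r_0)+1} η(r_i). Moreover, in the resulting order (r'_1, …, r'_k, r_0^{(k)}), every consecutive pair satisfies the alternating sign condition except the final pair (r'_k, r_0^{(k)}), which fails it. -/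

import Mathlib

/-- A row `r = (A, B, l, η)`: the data of an extended segment `([A, B], l, η)`
(with the constraints `B ≤ A` and `η ∈ {1, -1}` imposed as hypotheses via
`IsRow`). Its support is the integer interval `[B, A]`. -/
structure Row where
  A : ℤ
  B : ℤ
  l : ℤ
  eta : ℤ
deriving DecidableEq

instance : Inhabited Row := ⟨⟨0, 0, 0, 1⟩⟩

/-- `(-1)^n` for an integer `n` (only the parity of `n` matters). -/
def epow (n : ℤ) : ℤ := (-1) ^ n.natAbs

/-- `b(r) = A - B + 1`, the length of the support of `r`. -/
def Row.b (r : Row) : ℤ := r.A - r.B + 1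

/-- `C(r) = b(r) - 2l(r)`, the number of circles of `r`. -/
def Row.C (r : Row) : ℤ := r.b - 2 * r.l

/-- The defining constraints on a row: `B ≤ A` and `η ∈ {1, -1}`. -/
def IsRow (r : Row) : Prop := r.B ≤ r.A ∧ (r.eta = 1 ∨ r.eta = -1)

/-- The ordered pair of consecutive rows `(r₁, r₂)` satisfies the alternating
sign condition: `η(r₂) = (-1)^{C(r₁)} η(r₁)`. -/
def Alt (r₁ r₂ : Row) : Prop := r₂.eta = epow r₁.C * r₁.eta

/-- Case 1 row exchange of the consecutive pair `(r₁, r₂)` (for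
`supp(r₂) ⊆ supp(r₁)`); the result `(r₂', r₁')` is in the opposite order. -/
def exchange1 (r₁ r₂ : Row) : Row × Row :=
  let ε : ℤ := epow (r₁.A - r₁.B) * r₁.eta * r₂.eta
  let c₂ : ℤ := r₂.b - 2 * r₂.l
  let s₂ : Row := ⟨r₂.A, r₂.B, r₂.l, epow (r₁.A - r₁.B) * r₂.eta⟩
  let s₁ : Row :=
    if ε = 1 ∧ r₁.b - 2 * r₁.l < 2 * c₂ then
      ⟨r₁.A, r₁.B, r₁.b - (r₁.l + c₂), epow (r₂.A - r₂.B) * r₁.eta⟩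
    else if ε = 1 then
      ⟨r₁.A, r₁.B, r₁.l + c₂, epow (r₂.A - r₂.B + 1) * r₁.eta⟩
    else
      ⟨r₁.A, r₁.B, r₁.l - c₂, epow (r₂.A - r₂.B + 1) * r₁.eta⟩
  (s₂, s₁)

/-- Case 2 row exchange of the consecutive pair `(r₁, r₂)` (for
`supp(r₁) ⊆ supp(r₂)`); the result `(r₂', r₁')` is in the opposite order. -/
def exchange2 (r₁ r₂ : Row) : Row × Row :=
  let ε : ℤ := epow (r₁.A - r₁.B) * r₁.eta * r₂.eta
  let c₁ : ℤ := r₁.b - 2 * r₁.l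
  let s₁ : Row := ⟨r₁.A, r₁.B, r₁.l, epow (r₂.A - r₂.B) * r₁.eta⟩
  let s₂ : Row :=
    if ε = 1 ∧ r₂.b - 2 * r₂.l < 2 * c₁ then
      ⟨r₂.A, r₂.B, r₂.b - (r₂.l + c₁), epow (r₁.A - r₁.B) * r₂.eta⟩
    else if ε = 1 then
      ⟨r₂.A, r₂.B, r₂.l + c₁, epow (r₁.A - r₁.B + 1) * r₂.eta⟩
    else
      ⟨r₂.A, r₂.B, r₂.l - c₁, epow (r₁.A - r₁.B + 1) * r₂.eta⟩
  (s₂, s₁)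

/-- Move `r₀` down past the list `rs` by successive Case 1 row exchanges;
returns the final image of `r₀` together with the list of images of the rows
of `rs`. -/
def exchangeDown : Row → List Row → Row × List Row
  | r₀, [] => (r₀, [])
  | r₀, r :: rs =>
    let p := exchange1 r₀ r
    let q := exchangeDown p.2 rs
    (q.1, p.1 :: q.2)

theorem epow_add (a b : ℤ) : epow (a + b) = epow a * epow b := by
  have key : ∀ n : ℤ, epow n = if Even n then 1 else -1 := by
    intro n
    unfold epow
    split_ifs with h
    · exact Even.neg_one_pow (Int.natAbs_even.mpr h)
    · exact Odd.neg_one_pow (Int.natAbs_odd.mpr (Int.not_even_iff_odd.mp h))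
  rw [key, key, key]
  by_cases ha : Even a <;> by_cases hb : Even b <;> simp [Int.even_add, ha, hb]

theorem epow_one : epow 1 = -1 := by simp [epow]

theorem epow_sq (a : ℤ) : epow a * epow a = 1 := by
  unfold epow
  rw [← mul_pow]; simp

theorem epow_two_mul (a : ℤ) : epow (2 * a) = 1 := by
  rw [two_mul, epow_add, epow_sq]

theorem epow_C (r : Row) : epow r.C = - epow (r.A - r.B) := by
  have h : r.C = (r.A - r.B) + 1 + 2 * (-r.l) := by
    unfold Row.C Row.b; ring
  rw [h, epow_add, epow_add, epow_two_mul, epow_one]; ring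

theorem eta_sq {r : Row} (h : IsRow r) : r.eta * r.eta = 1 := by
  rcases h.2 with h | h <;> rw [h] <;> norm_num

theorem exchange1_alt (r₀ r : Row) (h₀ : IsRow r₀) (ha : Alt r₀ r) :
    exchange1 r₀ r = (⟨r.A, r.B, r.l, epow (r₀.C + 1) * r.eta⟩,
      ⟨r₀.A, r₀.B, r₀.l - r.C, epow r.C * r₀.eta⟩) := by
  have he : epow (r₀.A - r₀.B) * r₀.eta * r.eta = -1 := by
    unfold Alt at ha
    rw [ha, epow_C]
    linear_combination (-1 : ℤ) * r₀.eta * r₀.eta * epow_sq (r₀.A - r₀.B) - eta_sq h₀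
  unfold exchange1
  simp only [he]
  norm_num
  refine ⟨?_, rfl, ?_⟩
  · left; rw [epow_add, epow_C, epow_one]; ring
  · left; rw [epow_add, epow_C, epow_one]; ring

theorem isRow_step (r₀ r : Row) (h₀ : IsRow r₀) :
    IsRow ⟨r₀.A, r₀.B, r₀.l - r.C, epow r.C * r₀.eta⟩ := by
  refine ⟨h₀.1, ?_⟩
  have : (epow r.C * r₀.eta) * (epow r.C * r₀.eta) = 1 := by
    linear_combination r₀.eta * r₀.eta * epow_sq r.C + eta_sq h₀
  exact mul_self_eq_one_iff.mp this

theorem exchangeDown_main (rs : List Row) : ∀ (r₀ : Row), IsRow r₀ →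
    List.IsChain Alt (r₀ :: rs) →
    (exchangeDown r₀ rs).1.l = r₀.l - (rs.map Row.C).sum ∧
    (exchangeDown r₀ rs).1.eta = epow ((rs.map Row.C).sum) * r₀.eta ∧
    (exchangeDown r₀ rs).2 =
      rs.map (fun r => (⟨r.A, r.B, r.l, epow (r₀.C + 1) * r.eta⟩ : Row)) ∧
    (∀ h : (exchangeDown r₀ rs).2 ≠ [],
      ¬ Alt ((exchangeDown r₀ rs).2.getLast h) (exchangeDown r₀ rs).1) := by
  induction rs with
  | nil => intro r₀ h₀ _; simp [exchangeDown, epow]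
  | cons r rs ih =>
    intro r₀ h₀ hc
    rw [List.isChain_cons_cons] at hc
    obtain ⟨ha, hc⟩ := hc
    have hC : (⟨r₀.A, r₀.B, r₀.l - r.C, epow r.C * r₀.eta⟩ : Row).C = r₀.C + 2 * r.C := by
      simp only [Row.C, Row.b]; ring
    have hc' : List.IsChain Alt
        ((⟨r₀.A, r₀.B, r₀.l - r.C, epow r.C * r₀.eta⟩ : Row) :: rs) := by
      cases rs with
      | nil => simp
      | cons r2 rs =>
        rw [List.isChain_cons_cons] at hc ⊢
        refine ⟨?_, hc.2⟩
        have h1 := hc.1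
        unfold Alt at h1 ha ⊢
        rw [hC, h1, ha, epow_add, epow_two_mul]; ring
    obtain ⟨h1, h2, h3, h4⟩ := ih _ (isRow_step r₀ r h₀) hc'
    have hE : epow (r₀.C + 2 * r.C + 1) = epow (r₀.C + 1) := by
      rw [epow_add, epow_add, epow_add, epow_two_mul]; ring
    rw [hC, hE] at h3
    simp only [exchangeDown, exchange1_alt r₀ r h₀ ha]
    refine ⟨?_, ?_, ?_, ?_⟩
    · rw [h1]; simp; ring
    · rw [h2]; simp [epow_add]; ring
    · rw [h3]; simp
    · intro h
      cases rs with
      | nil =>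
        simp only [exchangeDown, List.getLast_singleton]
        unfold Alt at ha ⊢
        have e : (⟨r.A, r.B, r.l, epow (r₀.C + 1) * r.eta⟩ : Row).C = r.C := rfl
        simp only [e]
        rw [ha, epow_add, epow_one]
        intro h5
        have hz : epow r.C * r₀.eta = 0 := by
          have := epow_sq r₀.C
          have h6 : epow r.C * r₀.eta = - (epow r.C * r₀.eta) := by
            linear_combination h5 - epow r.C * r₀.eta * this
          linarith
        have := epow_sq r.C
        have h7 := eta_sq h₀
        rcases mul_eq_zero.mp hz with h8 | h8
        · rw [h8] at this; norm_num at this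
        · rw [h8] at h7; norm_num at h7
      | cons r2 rs =>
        have hne : (exchangeDown (⟨r₀.A, r₀.B, r₀.l - r.C, epow r.C * r₀.eta⟩ : Row)
          (r2 :: rs)).2 ≠ [] := by rw [h3]; simp
        rw [List.getLast_cons hne]
        exact h4 hne

/-- Big swap down (Lemma `big swap down`): moving `r₀` down past consecutive
rows `r₁, …, r_k` (all with support contained in that of `r₀`) which form an
alternating chain `(r₀, r₁, …, r_k)`. -/
theorem big_swap_down (r₀ : Row) (rs : List Row)
    (h₀ : IsRow r₀) (hrs : ∀ r ∈ rs, IsRow r)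
    (hsupp : ∀ r ∈ rs, r₀.B ≤ r.B ∧ r.A ≤ r₀.A)
    (hchain : List.Chain Alt r₀ rs) :
    let q := exchangeDown r₀ rs
    q.1.l = r₀.l - (rs.map Row.C).sum ∧
    q.1.eta = epow ((rs.map Row.C).sum) * r₀.eta ∧
    q.2.length = rs.length ∧
    (∀ i : ℕ, i < rs.length →
      (q.2.getD i default).l = (rs.getD i default).l ∧
      (q.2.getD i default).eta = epow (r₀.C + 1) * (rs.getD i default).eta) ∧
    List.Chain' Alt q.2 ∧
    (∀ h : q.2 ≠ [], ¬ Alt (q.2.getLast h) q.1) := by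
  intro q
  obtain ⟨h1, h2, h3, h4⟩ := exchangeDown_main rs r₀ h₀ hchain
  refine ⟨h1, h2, ?_, ?_, ?_, h4⟩
  · change (exchangeDown r₀ rs).2.length = _
    rw [h3]; simp
  · intro i hi
    change ((exchangeDown r₀ rs).2.getD i default).l = _ ∧
      ((exchangeDown r₀ rs).2.getD i default).eta = _
    rw [h3]
    simp [List.getD_eq_getElem?_getD, hi]
  · change List.IsChain Alt (exchangeDown r₀ rs).2
    rw [h3, List.isChain_map]
    have hc : List.IsChain Alt rs := List.IsChain.tail hchain
    refine hc.imp ?_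
    intro a b hab
    unfold Alt at hab ⊢
    have e : (⟨a.A, a.B, a.l, epow (r₀.C + 1) * a.eta⟩ : Row).C = a.C := rfl
    simp only [e]
    rw [hab]; ring
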